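/- Let q be a prime power with q ≡ 1 (mod 4), let ζ be a square root of -1 in F_q, let C_5 = {0, 1, -1, ζ, -ζ}, and let χ₄ be a multiplicative character of F_q of order 4 with complex values (extended by χ₄(0) = 0). Then the sum S(4;q,5) = Σ_{γ ∈ F_q \ C_5} Π_{α ∈ C_5} (3 - χ₄(γ - α) - χ₄((γ - α)²) - χ₄((γ - α)³)) is a real number and satisfies S(4;q,5) ≥ 3^5 (q - 49√q - 160). -/

import Mathlib

open Finset

/-!
Expanding the products turns `S` into a main term and sums `∑ γ, ∏ i, χ (γ - α i) ^ a i`, and each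
of these has absolute value at most `(r - 1) √q` by Weil's theorem, where `r` is the number of
points `α i`.

The `L`-function `∑ g, ∏ i, χ i (g (α i)) T ^ deg g` over monic `g` is a polynomial of degree less
than `r`, since its coefficients from degree `r` on vanish by interpolation. Its logarithmic
derivative generates the character sums over all extensions of `F_q`, which are therefore the
power sums of its reciprocal roots, up to sign. Over extensions of even degree `2 l` Stepanov's
method bounds them by a constant times `q ^ l`, and by recurrence on a torus a power sum cannot stay
that small unless every reciprocal root has absolute value at most `√q`.

Stepanov's method needs the total degree `∑ i, a i` to be coprime to the order of the character.
When a single exponent is, a Möbius substitution reduces to this case, and for a character of prime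
power order such an exponent appears after dividing all of them by their greatest common divisor.
-/

section Stepanov

open Polynomial

variable {K : Type*} [Field K] {f : K[X]} {d : ℕ} {ι : Type*} [Fintype ι]

lemma monomial_modByMonic_X_pow_sub_C {R : Type*} [CommRing R] (hd : d ≠ 0) (b : R) (t : ℕ)
    (a : R) :
    monomial t a %ₘ (X ^ d - C b) = monomial (t % d) (a * b ^ (t / d)) := by
  nontriviality R
  have hmonic := monic_X_pow_sub_C b hd
  have hdvd : X ^ d - C b ∣ monomial t a - monomial (t % d) (a * b ^ (t / d)) := by
    have hfactor : monomial t a - monomial (t % d) (a * b ^ (t / d)) =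
        C a * X ^ (t % d) * ((X ^ d) ^ (t / d) - C b ^ (t / d)) := by
      rw [← C_mul_X_pow_eq_monomial, ← C_mul_X_pow_eq_monomial, C_mul, C_pow]
      conv_lhs => rw [← Nat.mod_add_div t d, pow_add, pow_mul]
      rw [Nat.mod_add_div t d]
      ring
    rw [hfactor]
    exact (sub_dvd_pow_sub_pow _ _ _).mul_left _
  rw [modByMonic_eq_of_dvd_sub hmonic hdvd, modByMonic_eq_self_iff hmonic,
    degree_X_pow_sub_C (Nat.pos_of_ne_zero hd)]
  exact (degree_monomial_le _ _).trans_lt (by exact_mod_cast Nat.mod_lt t (Nat.pos_of_ne_zero hd))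

/-- The bivariate polynomial `∑ i, c i * X ^ s i * Y ^ t i`, linear in its coefficient vector `c`;
the inner variable of `K[X][X]` is `X` and the outer one is `Y`. The monomials `X ^ s i * Y ^ t i`
carry the weight `d * s i + deg f * t i`, for which `Y ^ d` and `f` have the same leading weight. -/
noncomputable def bivariateSum (s t : ι → ℕ) : (ι → K) →ₗ[K] K[X][X] :=
  Fintype.linearCombination K fun i => monomial (t i) (monomial (s i) 1)

lemma bivariateSum_apply (s t : ι → ℕ) (c : ι → K) :
    bivariateSum s t c = ∑ i, monomial (t i) (monomial (s i) (c i)) := by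
  simp [bivariateSum, Fintype.linearCombination_apply, smul_monomial]

lemma evalEval_bivariateSum (s t : ι → ℕ) (c : ι → K) (x y : K) :
    evalEval x y (bivariateSum s t c) = ∑ i, c i * x ^ s i * y ^ t i := by
  simp [bivariateSum_apply, evalEval_finsetSum, evalEval]

lemma coeff_bivariateSum_modByMonic (hd : d ≠ 0) (s t : ι → ℕ) (c : ι → K) (r : ℕ) :
    (bivariateSum s t c %ₘ (X ^ d - C f)).coeff r =
      ∑ i with t i % d = r, monomial (s i) (c i) * f ^ (t i / d) := by
  rw [bivariateSum_apply, ← modByMonicHom_apply, map_sum, finsetSum_coeff, sum_filter]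
  simp only [modByMonicHom_apply, monomial_modByMonic_X_pow_sub_C hd, coeff_monomial]

lemma mul_natDegree_monomial_mul_pow_add (hf : f ≠ 0) {a : K} (ha : a ≠ 0) (s t : ℕ) :
    d * (monomial s a * f ^ (t / d)).natDegree + f.natDegree * (t % d) =
      d * s + f.natDegree * t := by
  rw [natDegree_mul (by simpa using ha) (pow_ne_zero _ hf), natDegree_monomial_eq s ha,
    natDegree_pow]
  conv_rhs => rw [← Nat.div_add_mod t d]
  ring

lemma bivariateSum_modByMonic_ne_zero (hf : f ≠ 0) (hd : d ≠ 0) {s t : ι → ℕ}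
    (hinj : Function.Injective fun i => d * s i + f.natDegree * t i) {c : ι → K} (hc : c ≠ 0) :
    bivariateSum s t c %ₘ (X ^ d - C f) ≠ 0 := by
  obtain ⟨i₀, hi₀⟩ := Function.ne_iff.1 hc
  suffices (bivariateSum s t c %ₘ (X ^ d - C f)).coeff (t i₀ % d) ≠ 0 from
    fun h => this (by rw [h, coeff_zero])
  rw [coeff_bivariateSum_modByMonic hd, ← degree_ne_bot, degree_sum_eq_of_disjoint]
  · refine ne_bot_of_le_ne_bot ?_ (le_sup (mem_filter.2 ⟨mem_univ i₀, rfl⟩))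
    exact degree_ne_bot.2 (mul_ne_zero (by simpa using hi₀) (pow_ne_zero _ hf))
  · rintro i ⟨hi, hi0⟩ j ⟨hj, hj0⟩ hij hdeg
    refine hij (hinj ?_)
    have hci : c i ≠ 0 := fun h => hi0 (by simp [h])
    have hcj : c j ≠ 0 := fun h => hj0 (by simp [h])
    have hti := (mem_filter.1 hi).2
    have htj := (mem_filter.1 hj).2
    have hi_weight := mul_natDegree_monomial_mul_pow_add (d := d) hf hci (s i) (t i)
    have hj_weight := mul_natDegree_monomial_mul_pow_add (d := d) hf hcj (s j) (t j)
    rw [natDegree_eq_of_degree_eq hdeg, hti] at hi_weight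
    rw [htj] at hj_weight
    exact hi_weight.symm.trans hj_weight

lemma mul_natDegree_coeff_bivariateSum_modByMonic_le (hf : f ≠ 0) (hd : d ≠ 0) {s t : ι → ℕ}
    {W : ℕ} (hW : ∀ i, d * s i + f.natDegree * t i ≤ W) (c : ι → K) (r : ℕ) :
    d * ((bivariateSum s t c %ₘ (X ^ d - C f)).coeff r).natDegree ≤ W := by
  rw [coeff_bivariateSum_modByMonic hd, mul_comm, ← Nat.le_div_iff_mul_le (Nat.pos_of_ne_zero hd)]
  refine natDegree_sum_le_of_forall_le _ _ fun i _ => ?_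
  rw [Nat.le_div_iff_mul_le (Nat.pos_of_ne_zero hd), mul_comm]
  rcases eq_or_ne (c i) 0 with hci | hci
  · simp [hci]
  · exact (Nat.le_add_right _ _).trans
      ((mul_natDegree_monomial_mul_pow_add hf hci _ _).trans_le (hW i))

lemma exists_bivariateSum_modByMonic_eq_zero (hf : f ≠ 0) (hd : d ≠ 0) {s t : ι → ℕ} {W : ℕ}
    (hW : ∀ i, d * s i + f.natDegree * t i ≤ W) (hcard : W + d < Fintype.card ι) :
    ∃ c : ι → K, c ≠ 0 ∧ bivariateSum s t c %ₘ (X ^ d - C f) = 0 := by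
  let coords : (ι → K) →ₗ[K] Fin d × Fin (W / d + 1) → K :=
    LinearMap.pi fun k => lcoeff K k.2 ∘ₗ (lcoeff K[X] k.1).restrictScalars K ∘ₗ
      (modByMonicHom (X ^ d - C f)).restrictScalars K ∘ₗ bivariateSum s t
  have hker : LinearMap.ker coords ≠ ⊥ := by
    apply LinearMap.ker_ne_bot_of_finrank_lt
    simp only [Module.finrank_fintype_fun_eq_card, Fintype.card_prod, Fintype.card_fin]
    have := Nat.mul_div_le W d
    rw [mul_add, mul_one]
    lia
  obtain ⟨c, hc, hc0⟩ := Submodule.exists_mem_ne_zero_of_ne_bot hker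
  refine ⟨c, hc0, ext fun r => ext fun w => ?_⟩
  rw [coeff_zero, coeff_zero]
  by_cases hr : r < d
  · by_cases hw : w < W / d + 1
    · exact congrFun (LinearMap.mem_ker.1 hc) (⟨r, hr⟩, ⟨w, hw⟩)
    · have hdeg := mul_natDegree_coeff_bivariateSum_modByMonic_le hf hd hW c r
      rw [mul_comm, ← Nat.le_div_iff_mul_le (Nat.pos_of_ne_zero hd)] at hdeg
      exact coeff_eq_zero_of_natDegree_lt (by lia)
  · rw [coeff_bivariateSum_modByMonic hd, filter_false_of_mem, sum_empty, coeff_zero]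
    rintro i - rfl
    exact hr (Nat.mod_lt _ (Nat.pos_of_ne_zero hd))

lemma eq_zero_of_degree_lt_of_eval_eq_zero_of_pow_eq {R : Type*} [CommRing R] [IsDomain R] {ω : R}
    (hω : IsPrimitiveRoot ω d) {P : R[X]} (hP : P.degree < d) {y : R} (hy : y ≠ 0)
    (h : ∀ z, z ^ d = y ^ d → P.eval z = 0) : P = 0 := by
  refine eq_zero_of_degree_lt_of_eval_index_eq_zero (v := fun k => ω ^ k * y) (range d)
    (fun i hi j hj hij => ?_) (by rwa [card_range]) fun k _ => h _ ?_
  · exact hω.pow_inj (by simpa using hi) (by simpa using hj) (mul_right_cancel₀ hy hij)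
  · rw [mul_pow, pow_right_comm, hω.pow_eq_one, one_pow, one_mul]

lemma evalEval_modByMonic_X_pow_sub_C {P : K[X][X]} {x y : K} (hxy : y ^ d = f.eval x) :
    evalEval x y (P %ₘ (X ^ d - C f)) = evalEval x y P := by
  rw [← eval₂_evalRingHom]
  refine eval₂_modByMonic_eq_self_of_root ?_
  simp [hxy]

/-- A bivariate sum that vanishes on the curve `y ^ d = f x` has few zeros among the `x` below
points of the curve: its coordinates in the basis `1, Y, …, Y ^ (d - 1)` vanish at those `x`. -/
lemma mul_card_le_of_evalEval_bivariateSum_eq_zero {ω : K} (hω : IsPrimitiveRoot ω d) (hd : d ≠ 0)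
    (hf : f ≠ 0) {s t : ι → ℕ} {W : ℕ} (hW : ∀ i, d * s i + f.natDegree * t i ≤ W)
    {c : ι → K} (hc : bivariateSum s t c %ₘ (X ^ d - C f) ≠ 0)
    (hzero : ∀ x y : K, y ^ d = f.eval x → evalEval x y (bivariateSum s t c) = 0)
    {T : Finset K} (hT : ∀ x ∈ T, ∃ y : K, y ≠ 0 ∧ y ^ d = f.eval x) :
    d * #T ≤ W := by
  set G := bivariateSum s t c %ₘ (X ^ d - C f)
  have hG_map : ∀ x ∈ T, G.map (evalRingHom x) = 0 := by
    intro x hx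
    obtain ⟨y, hy, hxy⟩ := hT x hx
    refine eq_zero_of_degree_lt_of_eval_eq_zero_of_pow_eq hω ?_ hy fun z hz => ?_
    · refine degree_map_le.trans_lt ((degree_modByMonic_lt _ (monic_X_pow_sub_C f hd)).trans_eq ?_)
      exact degree_X_pow_sub_C (Nat.pos_of_ne_zero hd) f
    · rw [map_evalRingHom_eval, evalEval_modByMonic_X_pow_sub_C (hz.trans hxy),
        hzero x z (hz.trans hxy)]
  obtain ⟨r, hr⟩ : ∃ r, G.coeff r ≠ 0 := by
    by_contra! h
    exact hc (ext h)
  have hroots : #T ≤ (G.coeff r).natDegree := by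
    refine card_le_degree_of_subset_roots fun x hx => (mem_roots hr).2 ?_
    simpa using congrArg (coeff · r) (hG_map x hx)
  exact (Nat.mul_le_mul_left d hroots).trans
    (mul_natDegree_coeff_bivariateSum_modByMonic_le hf hd hW c r)

lemma evalEval_bivariateSum_pow [Fintype K] {p k : ℕ} [Fact p.Prime] [CharP K p]
    (hK : Fintype.card K = (p ^ k) ^ 2) (s s' t t' : ι → ℕ) (c : ι → K) (x y : K) :
    evalEval x y (bivariateSum (s + p ^ k • s') (t + p ^ k • t') c) ^ p ^ k =
      evalEval x y (bivariateSum (p ^ k • s + s') (p ^ k • t + t') (c ^ p ^ k)) := by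
  have hfrob : ∀ (z : K) (a b : ℕ), (z ^ (a + p ^ k * b)) ^ p ^ k = z ^ (p ^ k * a + b) := by
    intro z a b
    calc (z ^ (a + p ^ k * b)) ^ p ^ k = z ^ (p ^ k * a) * (z ^ b) ^ Fintype.card K := by
          rw [hK]; ring
      _ = z ^ (p ^ k * a + b) := by rw [FiniteField.pow_card, pow_add]
  rw [evalEval_bivariateSum, evalEval_bivariateSum, sum_pow_char_pow]
  refine sum_congr rfl fun i _ => ?_
  simp only [Pi.add_apply, Pi.smul_apply, Pi.pow_apply, smul_eq_mul, mul_pow, hfrob]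

/-- Stepanov's method, with `R = p ^ k`. Since there are many monomials, some relation
`∑ c i * (X ^ s i * Y ^ t i) ^ R * X ^ s' i * Y ^ t' i = 0` holds on the curve. As `z ↦ z ^ R` is an
involution of `K`, moving the exponent `R` to the other factor gives a function with the same zeros,
but not identically zero because its monomials have distinct weights. -/
lemma mul_card_le_of_frobenius_weights [Fintype K] {p k : ℕ} [Fact p.Prime] [CharP K p]
    (hK : Fintype.card K = (p ^ k) ^ 2) {ω : K} (hω : IsPrimitiveRoot ω d) (hd : d ≠ 0)
    (hf : f ≠ 0) {s s' t t' : ι → ℕ} {W W' : ℕ}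
    (hW : ∀ i, d * (p ^ k • s + s') i + f.natDegree * (p ^ k • t + t') i ≤ W)
    (hcard : W + d < Fintype.card ι)
    (hinj : Function.Injective fun i =>
      d * (s + p ^ k • s') i + f.natDegree * (t + p ^ k • t') i)
    (hW' : ∀ i, d * (s + p ^ k • s') i + f.natDegree * (t + p ^ k • t') i ≤ W')
    {T : Finset K} (hT : ∀ x ∈ T, ∃ y : K, y ≠ 0 ∧ y ^ d = f.eval x) :
    d * #T ≤ W' := by
  have hR0 : p ^ k ≠ 0 := pow_ne_zero k (Fact.out : p.Prime).ne_zero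
  obtain ⟨b, hb0, hb⟩ := exists_bivariateSum_modByMonic_eq_zero hf hd hW hcard
  obtain ⟨c, rfl⟩ : ∃ c : ι → K, c ^ p ^ k = b := by
    choose c hc using fun i => (bijective_iterateFrobenius (R := K) (p := p) (n := k)).2 (b i)
    exact ⟨c, funext hc⟩
  have hc0 : c ≠ 0 := by
    rintro rfl
    exact hb0 (zero_pow hR0)
  refine mul_card_le_of_evalEval_bivariateSum_eq_zero hω hd hf hW'
    (bivariateSum_modByMonic_ne_zero hf hd hinj hc0) (fun x y hxy => ?_) hT
  rw [← pow_eq_zero_iff hR0, evalEval_bivariateSum_pow hK,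
    ← evalEval_modByMonic_X_pow_sub_C hxy, hb, evalEval_zero]

lemma weight_injective {m d : ℕ} (h : m.Coprime d) (N : ℕ) :
    Function.Injective fun k : Fin N × Fin d => d * (k.1 : ℕ) + m * (k.2 : ℕ) := by
  rintro ⟨i, j⟩ ⟨i', j'⟩ hk
  have hmod : m * (j : ℕ) ≡ m * (j' : ℕ) [MOD d] := by
    simpa [Nat.ModEq] using congrArg (· % d) hk
  obtain rfl : j = j' := Fin.ext <|
    (hmod.cancel_left_of_coprime h.symm).eq_of_lt_of_lt j.isLt j'.isLt
  obtain rfl : i = i' := Fin.ext <| Nat.eq_of_mul_eq_mul_left j.pos (Nat.add_right_cancel hk)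
  rfl

lemma weight_le (m d N : ℕ) (k : Fin (N + 1) × Fin d) :
    d * (k.1 : ℕ) + m * (k.2 : ℕ) ≤ d * (N + m) := by
  rw [mul_add, mul_comm d m]
  gcongr
  exacts [Fin.is_le k.1, k.2.isLt.le]

lemma injective_add_mul_of_lt {α β : Type*} {u : α → ℕ} {v : β → ℕ} {R : ℕ}
    (hu : Function.Injective u) (hv : Function.Injective v) (huR : ∀ a, u a < R) :
    Function.Injective fun i : α × β => u i.1 + R * v i.2 := by
  rintro ⟨a, b⟩ ⟨a', b'⟩ h
  have hR : 0 < R := (Nat.zero_le _).trans_lt (huR a)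
  have hmod := congrArg (· % R) h
  have hdiv := congrArg (· / R) h
  simp only [Nat.add_mul_mod_self_left, Nat.mod_eq_of_lt (huR _)] at hmod
  simp only [Nat.add_mul_div_left _ _ hR, Nat.div_eq_of_lt (huR _), zero_add] at hdiv
  exact Prod.ext (hu hmod) (hv hdiv)

lemma weight_bound_add_lt_card {d m R N : ℕ} (hd : 0 < d)
    (hR : d * (m + 1) ^ 2 + 2 * m + 3 ≤ R) (hRN : R < d * (N + m + 2)) :
    R * (d * (N + m)) + d * (N + 3 * m + 2) + d < (N + 1) * d * ((N + 2 * m + 3) * d) := by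
  have hRN_mul : (R + 1) * (N + m) ≤ d * (N + m + 2) * (N + m) := Nat.mul_le_mul_right _ hRN
  have hdiv : R * (N + m) + (N + 3 * m + 3) < d * ((N + 1) * (N + 2 * m + 3)) := by nlinarith
  calc R * (d * (N + m)) + d * (N + 3 * m + 2) + d = d * (R * (N + m) + (N + 3 * m + 3)) := by ring
    _ < d * (d * ((N + 1) * (N + 2 * m + 3))) := Nat.mul_lt_mul_of_pos_left hdiv hd
    _ = (N + 1) * d * ((N + 2 * m + 3) * d) := by ring

/-- Bombieri's form of Stepanov's bound: `d * #T` is the number of points of the curve `y ^ d = f x`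
above `T`. -/
theorem mul_card_le_of_forall_exists_pow_eq [Fintype K] {p k : ℕ} [Fact p.Prime] [CharP K p]
    (hK : Fintype.card K = (p ^ k) ^ 2) {ω : K} (hω : IsPrimitiveRoot ω d) (hd : 0 < d)
    (hf : f ≠ 0) (hfd : f.natDegree.Coprime d)
    (hR : d * (f.natDegree + 1) ^ 2 + 2 * f.natDegree + 3 ≤ p ^ k)
    {T : Finset K} (hT : ∀ x ∈ T, ∃ y : K, y ≠ 0 ∧ y ^ d = f.eval x) :
    d * #T ≤ (p ^ k) ^ 2 + (2 * d * f.natDegree + d + 1) * p ^ k := by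
  set R := p ^ k with hR_def
  set m := f.natDegree with hm_def
  obtain ⟨N, hN⟩ : ∃ N, R / d = N + (m + 1) := by
    refine Nat.exists_eq_add_of_le' ((Nat.le_div_iff_mul_le hd).2 ?_)
    nlinarith
  have hNR : d * (N + m + 1) ≤ R := (congrArg (d * ·) hN).symm.trans_le (Nat.mul_div_le R d)
  have hRN : R < d * (N + m + 2) :=
    (Nat.lt_mul_div_succ R hd).trans_eq (congrArg (fun a => d * (a + 1)) hN)
  have hweight (i : Fin (N + 1) × Fin d) : d * (i.1 : ℕ) + m * i.2 ≤ d * (N + m) :=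
    weight_le m d N i
  have hweight' (j : Fin (N + 2 * m + 3) × Fin d) :
      d * (j.1 : ℕ) + m * j.2 ≤ d * (N + 3 * m + 2) :=
    (weight_le m d _ j).trans_eq (by ring)
  have hweight_mixed (i : (Fin (N + 1) × Fin d) × (Fin (N + 2 * m + 3) × Fin d)) :
      d * ((i.1.1 : ℕ) + R * i.2.1) + m * (i.1.2 + R * i.2.2) =
        d * (i.1.1 : ℕ) + m * i.1.2 + R * (d * (i.2.1 : ℕ) + m * i.2.2) := by ring
  refine (mul_card_le_of_frobenius_weights
    (ι := (Fin (N + 1) × Fin d) × (Fin (N + 2 * m + 3) × Fin d))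
    (s := fun i => (i.1.1 : ℕ)) (s' := fun i => (i.2.1 : ℕ)) (t := fun i => (i.1.2 : ℕ))
    (t' := fun i => (i.2.2 : ℕ))
    (W := R * (d * (N + m)) + d * (N + 3 * m + 2)) (W' := d * (N + m) + R * (d * (N + 3 * m + 2)))
    hK hω hd.ne' hf (fun i => ?_) ?_ ?_ (fun i => ?_) hT).trans ?_
  · simp only [Pi.add_apply, Pi.smul_apply, smul_eq_mul, ← hR_def, ← hm_def]
    linarith [Nat.mul_le_mul_left R (hweight i.1), hweight' i.2]
  · simpa using weight_bound_add_lt_card hd hR hRN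
  · simp only [Pi.add_apply, Pi.smul_apply, smul_eq_mul, ← hR_def, ← hm_def, hweight_mixed]
    exact injective_add_mul_of_lt (weight_injective hfd (N + 1)) (weight_injective hfd _)
      fun i => (hweight i).trans_lt (by linarith)
  · simp only [Pi.add_apply, Pi.smul_apply, smul_eq_mul, ← hR_def, ← hm_def, hweight_mixed]
    exact add_le_add (hweight i.1) (Nat.mul_le_mul_left R (hweight' i.2))
  · nlinarith

end Stepanov

section CharacterSum

lemma norm_mulChar_apply_le_one {R : Type*} [CommRing R] [Finite Rˣ] (ψ : MulChar R ℂ) (a : R) :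
    ‖ψ a‖ ≤ 1 := by
  cases nonempty_fintype Rˣ
  by_cases ha : IsUnit a
  · obtain ⟨u, rfl⟩ := ha
    exact (Complex.norm_eq_one_of_mem_rootsOfUnity (ψ.apply_mem_rootsOfUnity u)).le
  · simp [ψ.map_nonunit ha]

lemma sum_units_mulChar_eq_zero {R R' : Type*} [CommMonoid R] [Fintype Rˣ] [CommRing R']
    [IsDomain R'] {ψ : MulChar R R'} (hψ : ψ ≠ 1) : ∑ u : Rˣ, ψ u = 0 := by
  refine sum_hom_units_eq_zero ((ψ : R →* R').comp (Units.coeHom R)) fun h => hψ ?_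
  ext u
  simpa using DFunLike.congr_fun h u

lemma sum_mul_card_filter_pow_eq_mul {G R : Type*} [Group G] [Fintype G] [DecidableEq G]
    [CommSemiring R] (φ : G → R) (d : ℕ) (w : G) :
    ∑ c, φ c * #{y : G | y ^ d = c * w} = ∑ y, φ (y ^ d * w⁻¹) := by
  simp only [card_filter, Nat.cast_sum, mul_sum, Nat.cast_ite, mul_ite, ← mul_inv_eq_iff_eq_mul]
  rw [sum_comm]
  simp

variable {K : Type*} [Field K] [Fintype K] [DecidableEq K] {d : ℕ}

lemma sum_units_mul_card_filter_pow_eq_mul {R : Type*} [CommSemiring R] (φ : Kˣ → R) (d : ℕ)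
    (w : Kˣ) :
    ∑ c, φ c * #{y : Kˣ | (y : K) ^ d = c * w} = ∑ y, φ (y ^ d * w⁻¹) := by
  exact_mod_cast sum_mul_card_filter_pow_eq_mul φ d w

lemma sum_mulChar_inv_mul_card_filter_pow_eq_mul {ψ : MulChar K ℂ} (hψ : ψ ^ d = 1) (z : K) :
    ∑ c : Kˣ, ψ (c⁻¹ : Kˣ) * #{y : Kˣ | (y : K) ^ d = c * z} = Fintype.card Kˣ * ψ z := by
  by_cases hz : IsUnit z
  · obtain ⟨w, rfl⟩ := hz
    have hpow (y : Kˣ) : ψ ((y ^ d * w⁻¹)⁻¹ : Kˣ) = ψ w := by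
      have hone : ψ ((y⁻¹ : Kˣ) : K) ^ d = 1 := by
        rw [← MulChar.pow_apply_coe, hψ, MulChar.one_apply_coe]
      rw [mul_inv, inv_inv, ← inv_pow, Units.val_mul, Units.val_pow_eq_pow_val, map_mul, map_pow,
        hone, one_mul]
    rw [sum_units_mul_card_filter_pow_eq_mul (fun c => ψ (c⁻¹ : Kˣ))]
    simp only [hpow, sum_const, card_univ, nsmul_eq_mul]
  · obtain rfl : z = 0 := by simpa using hz
    simp [pow_eq_zero_iff', ψ.map_zero]

lemma sum_sum_card_filter_pow_eq_mul {X : Type*} [Fintype X] (g : X → K) (d : ℕ) :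
    ∑ c : Kˣ, ∑ x, #{y : Kˣ | (y : K) ^ d = c * g x} = Fintype.card Kˣ * #{x | g x ≠ 0} := by
  rw [sum_comm, card_filter, mul_sum]
  refine sum_congr rfl fun x _ => ?_
  split_ifs with hx
  · obtain ⟨w, hw⟩ := isUnit_iff_ne_zero.2 hx
    simpa only [one_mul, mul_one, Nat.cast_id, sum_const, card_univ, smul_eq_mul, hw] using
      sum_units_mul_card_filter_pow_eq_mul (fun _ => (1 : ℕ)) d w
  · rw [not_not] at hx
    simp [hx, pow_eq_zero_iff']

/-- Point counts on the twisted curves `y ^ d = c * g x` control the character sum: they are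
averaged over `c` against `ψ c⁻¹`. -/
lemma norm_sum_mulChar_le_of_card_le {ψ : MulChar K ℂ} (hψ : ψ ≠ 1) (hψd : ψ ^ d = 1)
    {X : Type*} [Fintype X] {g : X → K} {B : ℝ}
    (hB : ∀ c : Kˣ, (∑ x, #{y : Kˣ | (y : K) ^ d = c * g x} : ℕ) ≤ B) :
    ‖∑ x, ψ (g x)‖ ≤ B - #{x | g x ≠ 0} := by
  set N : Kˣ → ℕ := fun c => ∑ x, #{y : Kˣ | (y : K) ^ d = c * g x}
  have hcard : (0 : ℝ) < Fintype.card Kˣ := by exact_mod_cast Fintype.card_pos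
  have hsum_ψ : ∑ c : Kˣ, ψ (c⁻¹ : Kˣ) = 0 :=
    (Equiv.sum_comp (Equiv.inv Kˣ) fun c : Kˣ => ψ c).trans (sum_units_mulChar_eq_zero hψ)
  have hψ_sum : (Fintype.card Kˣ : ℂ) * ∑ x, ψ (g x) = ∑ c : Kˣ, ψ (c⁻¹ : Kˣ) * (N c - B) := by
    simp only [mul_sum, ← sum_mulChar_inv_mul_card_filter_pow_eq_mul hψd, mul_sub, sum_sub_distrib,
      ← sum_mul, hsum_ψ, zero_mul, sub_zero, N, Nat.cast_sum]
    exact sum_comm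
  have hnorm (c : Kˣ) : ‖ψ (c⁻¹ : Kˣ) * ((N c : ℂ) - B)‖ ≤ B - N c := by
    calc ‖ψ (c⁻¹ : Kˣ) * ((N c : ℂ) - B)‖ ≤ 1 * ‖((N c - B : ℝ) : ℂ)‖ := by
          rw [norm_mul]
          push_cast
          gcongr
          exact norm_mulChar_apply_le_one ψ _
      _ = B - N c := by
          rw [one_mul, Complex.norm_real, Real.norm_of_nonpos (sub_nonpos.2 (hB c)), neg_sub]
  refine le_of_mul_le_mul_left ?_ hcard
  calc (Fintype.card Kˣ : ℝ) * ‖∑ x, ψ (g x)‖ = ‖∑ c : Kˣ, ψ (c⁻¹ : Kˣ) * (N c - B)‖ := by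
        rw [← hψ_sum, norm_mul, Complex.norm_natCast]
    _ ≤ ∑ c : Kˣ, (B - N c) := norm_sum_le_of_le _ fun c _ => hnorm c
    _ = Fintype.card Kˣ * (B - #{x | g x ≠ 0}) := by
        rw [sum_sub_distrib, ← Nat.cast_sum, sum_sum_card_filter_pow_eq_mul g, sum_const, card_univ]
        push_cast
        ring

lemma card_units_filter_pow_eq_le (hd : 0 < d) (b : K) : #{y : Kˣ | (y : K) ^ d = b} ≤ d := by
  calc #{y : Kˣ | (y : K) ^ d = b} ≤ #(Polynomial.nthRoots d b).toFinset :=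
        card_le_card_of_injOn Units.val (fun y hy => by simpa [Polynomial.mem_nthRoots hd] using hy)
          Units.val_injective.injOn
    _ ≤ d := (Multiset.toFinset_card_le _).trans (Polynomial.card_nthRoots d b)

open Polynomial in
lemma card_sub_natDegree_le_card_filter_eval_ne_zero {f : K[X]} (hf : f ≠ 0) :
    Fintype.card K ≤ #{x | f.eval x ≠ 0} + f.natDegree := by
  rw [← card_univ, ← card_filter_add_card_filter_not (f.eval · ≠ 0)]
  gcongr
  exact card_le_degree_of_subset_roots fun x hx => (mem_roots hf).2 (by simpa using hx)

open Polynomial in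
theorem norm_sum_mulChar_eval_le {K : Type*} [Field K] [Fintype K] {d p k : ℕ} [Fact p.Prime]
    [CharP K p] (hK : Fintype.card K = (p ^ k) ^ 2) {ω : K} (hω : IsPrimitiveRoot ω d) (hd : 0 < d)
    {f : K[X]} (hf : f ≠ 0) (hfd : f.natDegree.Coprime d)
    (hR : d * (f.natDegree + 1) ^ 2 + 2 * f.natDegree + 3 ≤ p ^ k)
    {ψ : MulChar K ℂ} (hψ : ψ ≠ 1) (hψd : ψ ^ d = 1) :
    ‖∑ x, ψ (f.eval x)‖ ≤ (2 * d * f.natDegree + d + 1) * (p : ℝ) ^ k + f.natDegree := by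
  classical
  have hcount (c : Kˣ) : ∑ x, #{y : Kˣ | (y : K) ^ d = c * f.eval x} ≤
      (p ^ k) ^ 2 + (2 * d * f.natDegree + d + 1) * p ^ k := by
    have hcf : (C (c : K) * f).natDegree = f.natDegree := natDegree_C_mul c.ne_zero
    have hbound := mul_card_le_of_forall_exists_pow_eq (f := C (c : K) * f) hK hω hd
      (mul_ne_zero (by simp) hf) (hcf ▸ hfd) (hcf ▸ hR)
      (T := {x | ∃ y : Kˣ, (y : K) ^ d = c * f.eval x}) fun x hx => by
        obtain ⟨y, hy⟩ := (mem_filter.1 hx).2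
        exact ⟨y, y.ne_zero, by simp [hy]⟩
    rw [hcf] at hbound
    refine le_trans ?_ hbound
    rw [card_filter, mul_sum]
    refine sum_le_sum fun x _ => ?_
    split_ifs with hx
    · simpa using card_units_filter_pow_eq_le hd _
    · simpa [filter_eq_empty_iff] using hx
  have hnonzero : ((p : ℝ) ^ k) ^ 2 ≤ #{x | f.eval x ≠ 0} + f.natDegree := by
    exact_mod_cast hK ▸ card_sub_natDegree_le_card_filter_eval_ne_zero hf
  have := norm_sum_mulChar_le_of_card_le hψ hψd (g := f.eval) (fun c => Nat.cast_le.2 (hcount c))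
  push_cast at this
  linarith

end CharacterSum

section FieldCharpoly

open Polynomial Module

lemma charpoly_blockDiagonal_const {R m o : Type*} [CommRing R] [Fintype m] [DecidableEq m]
    [Fintype o] [DecidableEq o] (M : Matrix m m R) :
    (Matrix.blockDiagonal fun _ : o => M).charpoly = M.charpoly ^ Fintype.card o := by
  have hchar : (Matrix.blockDiagonal fun _ : o => M).charmatrix =
      Matrix.blockDiagonal fun _ : o => M.charmatrix := by
    ext ⟨i, a⟩ ⟨j, b⟩
    simp only [Matrix.charmatrix_apply, Matrix.blockDiagonal_apply, Matrix.diagonal_apply,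
      Prod.mk.injEq]
    by_cases hab : a = b <;> simp [hab]
  rw [Matrix.charpoly, hchar, Matrix.det_blockDiagonal, prod_const, card_univ, Matrix.charpoly]

lemma card_filter_minpoly_eq {F K : Type*} [Field F] [Field K] [Algebra F K] [Finite F] [Fintype K]
    {P : F[X]} (hP : Irreducible P) (hPm : P.Monic) (hdvd : P.natDegree ∣ finrank F K)
    [DecidablePred fun x : K => minpoly F x = P] :
    #{x : K | minpoly F x = P} = P.natDegree := by
  classical
  have : Fact (Irreducible P) := ⟨hP⟩
  have hfinrank : finrank F (AdjoinRoot P) = P.natDegree := by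
    rw [(AdjoinRoot.powerBasis hP.ne_zero).finrank, AdjoinRoot.powerBasis_dim]
  obtain ⟨φ⟩ := FiniteField.nonempty_algHom_of_finrank_dvd (F := F) (K := AdjoinRoot P) (L := K)
    (by rwa [hfinrank])
  have hroot : aeval (φ (AdjoinRoot.root P)) P = 0 := by
    rw [aeval_algHom_apply, AdjoinRoot.aeval_eq, AdjoinRoot.mk_self, map_zero]
  have hsplits : (P.map (algebraMap F K)).Splits := by
    rw [minpoly.eq_of_irreducible_of_monic hP hroot hPm]
    exact Normal.splits inferInstance _
  rw [← card_rootSet_eq_natDegree (PerfectField.separable_of_irreducible hP) hsplits,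
    ← Set.toFinset_card]
  congr 1
  ext x
  simp only [mem_filter, mem_univ, true_and, Set.mem_toFinset, mem_rootSet_of_ne hP.ne_zero]
  exact ⟨fun h => h ▸ minpoly.aeval F x,
    fun h => (minpoly.eq_of_irreducible_of_monic hP h hPm).symm⟩

variable (F : Type*) {K : Type*} [Field F] [Field K] [Algebra F K] [FiniteDimensional F K]

/-- The characteristic polynomial over `F` of multiplication by `x` on `K`. Its values are norms, so
it turns character sums over `K` into sums over polynomials. -/
noncomputable abbrev fieldCharpoly (x : K) : F[X] := (Algebra.lmul F K x).charpoly

lemma natDegree_fieldCharpoly (x : K) : (fieldCharpoly F x).natDegree = finrank F K :=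
  LinearMap.charpoly_natDegree _

lemma isMonicOfDegree_fieldCharpoly (x : K) :
    IsMonicOfDegree (fieldCharpoly F x) (finrank F K) :=
  ⟨LinearMap.charpoly_natDegree _, LinearMap.charpoly_monic _⟩

lemma eval_fieldCharpoly (x : K) (a : F) :
    (fieldCharpoly F x).eval a = Algebra.norm F (algebraMap F K a - x) := by
  rw [LinearMap.eval_charpoly, Algebra.norm_apply, ← (Algebra.lmul F K).commutes, ← map_sub]

lemma natDegree_minpoly_mul_finrank_adjoin (x : K) :
    (minpoly F x).natDegree * finrank (IntermediateField.adjoin F {x}) K = finrank F K := by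
  rw [← IntermediateField.adjoin.finrank (Algebra.IsIntegral.isIntegral x), finrank_mul_finrank]

lemma fieldCharpoly_algebraMap_gen {L : Type*} [Field L] [Algebra F L] [Algebra L K]
    [IsScalarTower F L K] (b : PowerBasis F L) :
    fieldCharpoly F (algebraMap L K b.gen) = minpoly F b.gen ^ finrank L K := by
  have : FiniteDimensional L K := .right F L K
  rw [fieldCharpoly, ← LinearMap.charpoly_toMatrix _ (b.basis.smulTower (finBasis L K))]
  change (Algebra.leftMulMatrix _ _).charpoly = _
  rw [Algebra.smulTower_leftMulMatrix_algebraMap, charpoly_blockDiagonal_const,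
    charpoly_leftMulMatrix, Fintype.card_fin]

lemma fieldCharpoly_eq_minpoly_pow (x : K) :
    fieldCharpoly F x = minpoly F x ^ finrank (IntermediateField.adjoin F {x}) K := by
  have := fieldCharpoly_algebraMap_gen F (K := K)
    (IntermediateField.adjoin.powerBasis (Algebra.IsIntegral.isIntegral (R := F) x))
  rwa [IntermediateField.adjoin.powerBasis_gen, IntermediateField.minpoly_gen] at this

variable {F}

lemma pow_dvd_mul_and_not_pow_dvd_iff {P Q g : F[X]} {e : ℕ} (hP : Irreducible P)
    (hQ : Irreducible Q) (hPm : P.Monic) (hQm : Q.Monic) (hg : g ≠ 0) :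
    Q ^ e ∣ P * g ∧ ¬ Q ^ e ∣ g ↔ Q = P ∧ e = multiplicity P g + 1 := by
  by_cases hQP : Q = P
  · subst hQP
    have hfin {h : F[X]} (hh : h ≠ 0) : FiniteMultiplicity Q h :=
      FiniteMultiplicity.of_prime_left hQ.prime hh
    rw [(hfin (mul_ne_zero hQ.ne_zero hg)).pow_dvd_iff_le_multiplicity,
      (hfin hg).pow_dvd_iff_le_multiplicity,
      multiplicity_mul hQ.prime (hfin (mul_ne_zero hQ.ne_zero hg)), multiplicity_self]
    grind
  · have hcop : IsCoprime (Q ^ e) P := by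
      refine IsCoprime.pow_left (hQ.coprime_iff_not_dvd.2 fun h => hQP ?_)
      exact eq_of_monic_of_associated hQm hPm (hQ.associated_of_dvd hP h)
    simp only [hQP, false_and, iff_false, not_and, not_not]
    exact hcop.dvd_of_dvd_mul_left

lemma fieldCharpoly_dvd_mul_and_not_dvd_iff {P g : F[X]} (hP : Irreducible P) (hPm : P.Monic)
    (hg : g ≠ 0) (x : K) :
    fieldCharpoly F x ∣ P * g ∧ ¬ fieldCharpoly F x ∣ g ↔
      minpoly F x = P ∧ finrank F K = (multiplicity P g + 1) * P.natDegree := by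
  have hx : IsIntegral F x := Algebra.IsIntegral.isIntegral x
  rw [fieldCharpoly_eq_minpoly_pow, pow_dvd_mul_and_not_pow_dvd_iff hP (minpoly.irreducible hx) hPm
    (minpoly.monic hx) hg]
  refine and_congr_right fun hxP => ?_
  rw [← natDegree_minpoly_mul_finrank_adjoin F x, hxP, mul_comm, mul_left_inj' hP.natDegree_pos.ne']

open Classical in
lemma card_filter_fieldCharpoly_dvd_mul [Finite F] [Fintype K] {P g : F[X]} (hP : Irreducible P)
    (hPm : P.Monic) (hg : g ≠ 0) :
    #{x : K | fieldCharpoly F x ∣ P * g} = #{x : K | fieldCharpoly F x ∣ g} +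
      if finrank F K = (multiplicity P g + 1) * P.natDegree then P.natDegree else 0 := by
  have hfilter : ({x : K | fieldCharpoly F x ∣ P * g} : Finset K).filter
      (fun x => fieldCharpoly F x ∣ g) = ({x : K | fieldCharpoly F x ∣ g} : Finset K) := by
    rw [filter_filter]
    exact filter_congr fun x _ => and_iff_right_of_imp fun h => h.mul_left P
  rw [← card_filter_add_card_filter_not (s := {x : K | fieldCharpoly F x ∣ P * g})
    (fun x => fieldCharpoly F x ∣ g), hfilter, filter_filter]
  simp only [fieldCharpoly_dvd_mul_and_not_dvd_iff hP hPm hg]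
  split_ifs with hfinrank
  · simp only [hfinrank, and_true]
    rw [card_filter_minpoly_eq hP hPm (hfinrank ▸ dvd_mul_left _ _)]
  · simp [hfinrank]

lemma multiplicity_mul_natDegree_le {P g : F[X]} (hg : g ≠ 0) :
    multiplicity P g * P.natDegree ≤ g.natDegree := by
  rw [← natDegree_pow]
  exact natDegree_le_of_dvd (pow_multiplicity_dvd P g) hg

open Classical in
theorem sum_card_filter_fieldCharpoly_dvd [Finite F] (E : ℕ → Type*) [∀ j, Field (E j)]
    [∀ j, Algebra F (E j)] [∀ j, FiniteDimensional F (E j)] [∀ j, Fintype (E j)]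
    (hE : ∀ j, finrank F (E j) = j + 1) {g : F[X]} (hg : g ≠ 0) {n : ℕ} (hn : g.natDegree ≤ n) :
    ∑ j ∈ range n, #{x : E j | fieldCharpoly F x ∣ g} = g.natDegree := by
  induction g using WfDvdMonoid.induction_on_irreducible with
  | zero => exact absurd rfl hg
  | unit g hu =>
    rw [natDegree_eq_zero_of_isUnit hu]
    refine sum_eq_zero fun j _ => card_eq_zero.2 (filter_eq_empty_iff.2 fun x _ hx => ?_)
    have := natDegree_eq_zero_of_isUnit (isUnit_of_dvd_unit hx hu)
    rw [natDegree_fieldCharpoly, hE] at this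
    omega
  | mul g P hg0 hP ih =>
    have hassoc := associated_normalize P
    have hP' : Irreducible (normalize P) := hassoc.irreducible hP
    have hdeg : (normalize P).natDegree = P.natDegree :=
      natDegree_eq_of_degree_eq degree_normalize
    have hmult := multiplicity_mul_natDegree_le (P := normalize P) hg0
    have hpos : 0 < (multiplicity (normalize P) g + 1) * (normalize P).natDegree :=
      Nat.mul_pos (Nat.succ_pos _) hP'.natDegree_pos
    rw [natDegree_mul hP.ne_zero hg0, ← hdeg] at hn ⊢
    simp only [(hassoc.mul_right g).dvd_iff_dvd_right, hE,
      card_filter_fieldCharpoly_dvd_mul hP' (monic_normalize hP.ne_zero) hg0]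
    rw [sum_add_distrib, ih hg0 (by omega), add_comm, add_left_inj,
      sum_eq_single_of_mem ((multiplicity (normalize P) g + 1) * (normalize P).natDegree - 1)]
    · exact if_pos (by omega)
    · rw [add_mul, one_mul] at hpos ⊢
      exact mem_range.2 (by omega)
    · exact fun j _ hj => if_neg (by omega)

end FieldCharpoly

section LFunction

open Polynomial Module

variable {F : Type*} [Field F] {ι : Type*} [Fintype ι]

/-- The completely multiplicative function `g ↦ ∏ i, χ i (g (α i))` on polynomials, whose
`L`-function governs the sums `∑ x, ∏ i, χ i (α i - x)`. -/
noncomputable def evalMulChar (α : ι → F) (χ : ι → MulChar F ℂ) : F[X] →* ℂ :=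
  ∏ i, (χ i).toMonoidHom.comp (evalRingHom (α i)).toMonoidHom

lemma evalMulChar_apply (α : ι → F) (χ : ι → MulChar F ℂ) (g : F[X]) :
    evalMulChar α χ g = ∏ i, χ i (g.eval (α i)) := by
  simp [evalMulChar]

lemma evalMulChar_add_C_mul_lagrangeBasis [DecidableEq ι] {α : ι → F} (hα : Function.Injective α)
    (χ : ι → MulChar F ℂ) (i₀ : ι) (g : F[X]) (a : F) :
    evalMulChar α χ (g + C a * Lagrange.basis univ α i₀) =
      χ i₀ (g.eval (α i₀) + a) * ∏ i ∈ univ.erase i₀, χ i (g.eval (α i)) := by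
  rw [evalMulChar_apply, ← mul_prod_erase _ _ (mem_univ i₀)]
  congr 1
  · simp [Lagrange.eval_basis_self hα.injOn (mem_univ i₀)]
  · refine prod_congr rfl fun i hi => ?_
    simp [Lagrange.eval_basis_of_ne (ne_of_mem_erase hi).symm (mem_univ i)]

lemma finite_setOf_isMonicOfDegree (R : Type*) [Ring R] [Finite R] (n : ℕ) :
    {g : R[X] | IsMonicOfDegree g n}.Finite := by
  have : Finite (degreeLT R n) := Finite.of_equiv _ (degreeLTEquiv R n).symm.toEquiv
  nontriviality R
  refine (Set.finite_range fun p : degreeLT R n => X ^ n + (p : R[X])).subset ?_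
  rintro g ⟨rfl, hg⟩
  refine ⟨⟨g - X ^ g.natDegree, mem_degreeLT.2 ?_⟩, by simp⟩
  rw [← degree_eq_natDegree hg.ne_zero]
  exact degree_sub_lt_left (by rw [degree_X_pow, degree_eq_natDegree hg.ne_zero]) hg.ne_zero
    (by simp [hg.leadingCoeff])

/-- The monic polynomials of degree `n` over a finite ring, over which the coefficient of degree `n`
of an `L`-function is summed. -/
noncomputable def monicsOfDegree (R : Type*) [Ring R] [Finite R] (n : ℕ) : Finset R[X] :=
  (finite_setOf_isMonicOfDegree R n).toFinset

@[simp] lemma mem_monicsOfDegree {R : Type*} [Ring R] [Finite R] {n : ℕ} {g : R[X]} :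
    g ∈ monicsOfDegree R n ↔ IsMonicOfDegree g n := by
  simp [monicsOfDegree]

lemma monicsOfDegree_zero (R : Type*) [Ring R] [Finite R] : monicsOfDegree R 0 = {1} := by
  ext g
  simp

open Classical in
lemma sum_monicsOfDegree_filter_dvd {R M : Type*} [CommRing R] [Finite R] [CommSemiring M]
    (h : R[X] →* M) {p : R[X]} {m n : ℕ} (hp : IsMonicOfDegree p m) :
    ∑ g ∈ monicsOfDegree R (m + n) with p ∣ g, h g = h p * ∑ g ∈ monicsOfDegree R n, h g := by
  rw [mul_sum]
  refine (sum_bij (fun g _ => p * g) ?_ ?_ ?_ fun g _ => (map_mul h p g).symm).symm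
  · exact fun g hg => by simpa using hp.mul (mem_monicsOfDegree.1 hg)
  · exact fun a _ b _ hab => hp.monic.isRegular.left hab
  · intro g hg
    obtain ⟨hg, b, rfl⟩ := mem_filter.1 hg
    exact ⟨b, mem_monicsOfDegree.2 (hp.of_mul_left (mem_monicsOfDegree.1 hg)), rfl⟩

variable [Finite F]

/-- Newton's identity `n * c n = ∑ S j * c (n - j)` between the coefficients of the `L`-function
of `h` and its power sums: count the pairs `(g, x)` with `fieldCharpoly F x ∣ g`. -/
theorem mul_sum_monicsOfDegree (E : ℕ → Type*) [∀ j, Field (E j)] [∀ j, Algebra F (E j)]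
    [∀ j, FiniteDimensional F (E j)] [∀ j, Fintype (E j)] (hE : ∀ j, finrank F (E j) = j + 1)
    {M : Type*} [CommSemiring M] (h : F[X] →* M) (n : ℕ) :
    n * ∑ g ∈ monicsOfDegree F n, h g =
      ∑ j ∈ range n, (∑ x : E j, h (fieldCharpoly F x)) *
        ∑ g ∈ monicsOfDegree F (n - 1 - j), h g := by
  classical
  calc (n : M) * ∑ g ∈ monicsOfDegree F n, h g
      = ∑ g ∈ monicsOfDegree F n, ∑ j ∈ range n, ∑ x : E j with fieldCharpoly F x ∣ g, h g := by
        rw [mul_sum]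
        refine sum_congr rfl fun g hg => ?_
        obtain ⟨hgn, hgm⟩ := mem_monicsOfDegree.1 hg
        have hcount := sum_card_filter_fieldCharpoly_dvd E hE hgm.ne_zero hgn.le
        simp only [sum_const, nsmul_eq_mul]
        rw [← sum_mul, ← Nat.cast_sum, hcount, hgn]
    _ = ∑ j ∈ range n, ∑ x : E j, ∑ g ∈ monicsOfDegree F n with fieldCharpoly F x ∣ g, h g := by
        rw [sum_comm]
        refine sum_congr rfl fun j _ => ?_
        simp only [sum_filter]
        exact sum_comm
    _ = _ := by
        refine sum_congr rfl fun j hj => ?_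
        rw [sum_mul]
        refine sum_congr rfl fun x _ => ?_
        rw [← sum_monicsOfDegree_filter_dvd h (isMonicOfDegree_fieldCharpoly F x), hE]
        congr 3
        have := mem_range.1 hj
        omega

lemma sum_monicsOfDegree_comp_add {R M : Type*} [Ring R] [Finite R] [AddCommMonoid M]
    (φ : R[X] → M) {n : ℕ} {q : R[X]} (hq : q.natDegree < n) :
    ∑ g ∈ monicsOfDegree R n, φ (g + q) = ∑ g ∈ monicsOfDegree R n, φ g := by
  have hq' : (-q).natDegree < n := by rwa [natDegree_neg]
  exact sum_bij' (fun g _ => g + q) (fun g _ => g + -q)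
    (fun g hg => mem_monicsOfDegree.2 ((mem_monicsOfDegree.1 hg).add_right hq))
    (fun g hg => mem_monicsOfDegree.2 ((mem_monicsOfDegree.1 hg).add_right hq'))
    (by simp) (by simp) fun _ _ => rfl

/-- Translating `g` by the multiples of the Lagrange basis polynomial at `α i₀` averages the factor
`χ i₀` over the field and leaves the other factors alone. -/
theorem sum_monicsOfDegree_evalMulChar_eq_zero {α : ι → F} (hα : Function.Injective α)
    {χ : ι → MulChar F ℂ} {i₀ : ι} (hi₀ : χ i₀ ≠ 1) {n : ℕ} (hn : Fintype.card ι ≤ n) :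
    ∑ g ∈ monicsOfDegree F n, evalMulChar α χ g = 0 := by
  classical
  cases nonempty_fintype F
  set L := Lagrange.basis univ α i₀
  have hL (a : F) : (C a * L).natDegree < n := by
    have hcard : 0 < Fintype.card ι := Fintype.card_pos_iff.2 ⟨i₀⟩
    have : L.natDegree = Fintype.card ι - 1 :=
      natDegree_eq_of_degree_eq_some (Lagrange.degree_basis hα.injOn (mem_univ i₀))
    exact (natDegree_C_mul_le a L).trans_lt (by omega)
  have hvanish (g : F[X]) : ∑ a, evalMulChar α χ (g + C a * L) = 0 := by
    simp only [L, evalMulChar_add_C_mul_lagrangeBasis hα, ← sum_mul]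
    have hsum : ∑ a, χ i₀ (g.eval (α i₀) + a) = ∑ a, χ i₀ a :=
      Equiv.sum_comp (Equiv.addLeft (g.eval (α i₀))) fun a => χ i₀ a
    rw [hsum, MulChar.sum_eq_zero_of_ne_one hi₀, zero_mul]
  have hzero : (Fintype.card F : ℂ) * ∑ g ∈ monicsOfDegree F n, evalMulChar α χ g = 0 := by
    calc (Fintype.card F : ℂ) * ∑ g ∈ monicsOfDegree F n, evalMulChar α χ g
        = ∑ a : F, ∑ g ∈ monicsOfDegree F n, evalMulChar α χ (g + C a * L) := by
          simp only [sum_monicsOfDegree_comp_add (evalMulChar α χ) (hL _), sum_const, card_univ,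
            nsmul_eq_mul]
      _ = 0 := by rw [sum_comm, sum_eq_zero fun g _ => hvanish g]
  exact (mul_eq_zero.1 hzero).resolve_left (Nat.cast_ne_zero.2 Fintype.card_ne_zero)

end LFunction

section PowerSums

open Polynomial Filter

/-- By recurrence of rotations of a torus, the arguments of all the `z i ^ l` are simultaneously
small for arbitrarily large `l`. -/
lemma frequently_norm_pow_div_two_le_re_pow {ι : Type*} [Finite ι] (z : ι → ℂ) :
    ∃ᶠ l in atTop, ∀ i, ‖z i‖ ^ l / 2 ≤ (z i ^ l).re := by
  have hpolar (i : ι) : ∃ u : Circle, z i = ‖z i‖ * (u : ℂ) :=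
    ⟨Circle.exp (z i).arg, by rw [Circle.coe_exp, Complex.norm_mul_exp_arg_mul_I]⟩
  choose u hu using hpolar
  have hnhds : {v : ι → Circle | ∀ i, 1 / 2 < (v i : ℂ).re} ∈ nhds (1 : ι → Circle) := by
    refine IsOpen.mem_nhds ?_ fun _ => by norm_num
    simp only [Set.ofPred_forall]
    exact isOpen_iInter_of_finite fun _ => isOpen_lt continuous_const (by fun_prop)
  refine (mapClusterPt_iff_frequently.1 (mapClusterPt_one_atTop_pow u) _ hnhds).mono
    fun l hl i => ?_
  have hre : 1 / 2 < ((u i ^ l : Circle) : ℂ).re := hl i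
  have hpow : (z i ^ l).re = ‖z i‖ ^ l * ((u i ^ l : Circle) : ℂ).re := by
    conv_lhs => rw [hu i]
    rw [mul_pow, ← Complex.ofReal_pow, Complex.re_ofReal_mul, Circle.coe_pow]
  rw [hpow, div_eq_mul_one_div]
  gcongr

theorem norm_le_of_norm_sum_pow_le {ι : Type*} [Fintype ι] {z : ι → ℂ} {B C : ℝ} (hB : 0 < B)
    {l₀ : ℕ} (h : ∀ l ≥ l₀, ‖∑ i, z i ^ l‖ ≤ C * B ^ l) (i : ι) : ‖z i‖ ≤ B := by
  by_contra! hi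
  have hgrowth : ∀ᶠ l : ℕ in atTop, 2 * C < (‖z i‖ / B) ^ l :=
    (tendsto_pow_atTop_atTop_of_one_lt ((one_lt_div hB).2 hi)).eventually_gt_atTop _
  obtain ⟨l, hre, hgt, hl⟩ := ((frequently_norm_pow_div_two_le_re_pow z).and_eventually
    (hgrowth.and (eventually_ge_atTop l₀))).exists
  have hle : ‖z i‖ ^ l / 2 ≤ C * B ^ l := by
    calc ‖z i‖ ^ l / 2 ≤ ∑ j, ‖z j‖ ^ l / 2 :=
          single_le_sum (f := fun j => ‖z j‖ ^ l / 2) (fun j _ => by positivity) (mem_univ i)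
      _ ≤ ∑ j, (z j ^ l).re := sum_le_sum fun j _ => hre j
      _ = (∑ j, z j ^ l).re := (Complex.re_sum _ _).symm
      _ ≤ ‖∑ j, z j ^ l‖ := Complex.re_le_norm _
      _ ≤ C * B ^ l := h l hl
  rw [div_pow, lt_div_iff₀ (by positivity)] at hgt
  linarith

lemma exists_univ_val_map_eq {α : Type*} {k : ℕ} {s : Multiset α} (hs : s.card = k) :
    ∃ ω : Fin k → α, (univ : Finset (Fin k)).val.map ω = s := by
  induction s using Quotient.inductionOn with
  | h l =>
    subst hs
    exact ⟨l.get, (Fin.univ_val_map l.get).trans (congrArg _ (List.ofFn_get l))⟩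

lemma succ_mul_esymm_eq_sum_range (σ R : Type*) [Fintype σ] [CommRing R] (m : ℕ) :
    (m + 1) * MvPolynomial.esymm σ R (m + 1) = ∑ j ∈ range (m + 1),
      (-1) ^ j * MvPolynomial.esymm σ R (m - j) * MvPolynomial.psum σ R (j + 1) := by
  classical
  have hnewton := MvPolynomial.mul_esymm_eq_sum σ R (m + 1)
  rw [sum_filter, Nat.sum_antidiagonal_succ', if_neg (lt_irrefl _), zero_add,
    ← Nat.sum_antidiagonal_swap, Nat.sum_antidiagonal_eq_sum_range_succ_mk, mul_sum] at hnewton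
  push_cast at hnewton
  refine hnewton.trans (sum_congr rfl fun j hj => ?_)
  have hjm : m + 1 + 1 + (m - j) = j + 2 * (m - j + 1) := by grind
  rw [Prod.swap_prod_mk, if_pos (by omega), ← mul_assoc, ← mul_assoc, ← pow_add, hjm, pow_add,
    pow_mul]
  simp

lemma mul_neg_one_pow_mul_aeval_esymm {σ R : Type*} [Fintype σ] [CommRing R] (ω : σ → R) (n : ℕ) :
    n * ((-1) ^ n * MvPolynomial.aeval ω (MvPolynomial.esymm σ R n)) =
      ∑ j ∈ range n, (-∑ i, ω i ^ (j + 1)) *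
        ((-1) ^ (n - 1 - j) * MvPolynomial.aeval ω (MvPolynomial.esymm σ R (n - 1 - j))) := by
  cases n with
  | zero => simp
  | succ m =>
    have hnewton := congrArg (MvPolynomial.aeval ω) (succ_mul_esymm_eq_sum_range σ R m)
    simp only [map_mul, map_add, map_sum, map_pow, map_neg, map_one, map_natCast, MvPolynomial.psum,
      MvPolynomial.aeval_X] at hnewton
    rw [mul_left_comm, Nat.cast_succ, hnewton, mul_sum, Nat.add_sub_cancel]
    refine sum_congr rfl fun j hj => ?_
    obtain ⟨i, rfl⟩ := Nat.exists_eq_add_of_le (mem_range_succ_iff.1 hj)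
    have hsign : (-1 : R) ^ j * (-1) ^ j = 1 := by rw [← mul_pow]; simp
    rw [Nat.add_sub_cancel_left, pow_succ, pow_add]
    linear_combination (-(-1) ^ i * (MvPolynomial.aeval ω (MvPolynomial.esymm σ R i)) *
      ∑ i, ω i ^ (j + 1)) * hsign

lemma exists_eq_neg_one_pow_mul_esymm {L : Type*} [Field L] [IsAlgClosed L] {c : ℕ → L} {k : ℕ}
    (hc0 : c 0 = 1) (hc : ∀ n, k < n → c n = 0) :
    ∃ s : Multiset L, s.card = k ∧ ∀ n, c n = (-1) ^ n * s.esymm n := by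
  set P : L[X] := ∑ i ∈ range (k + 1), C (c (k - i)) * X ^ i
  have hcoeff {i : ℕ} (hi : i ≤ k) : P.coeff i = c (k - i) := by
    simp [P, finsetSum_coeff, coeff_X_pow, hi]
  have hlead : P.coeff k = 1 := by rw [hcoeff le_rfl, Nat.sub_self, hc0]
  have hdeg : P.natDegree = k := by
    refine natDegree_eq_of_le_of_coeff_ne_zero ?_ (hlead ▸ one_ne_zero)
    exact natDegree_sum_le_of_forall_le _ _ fun i hi =>
      (natDegree_C_mul_X_pow_le _ _).trans (mem_range_succ_iff.1 hi)
  have hcard : P.roots.card = P.natDegree := IsAlgClosed.card_roots_eq_natDegree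
  refine ⟨P.roots, hcard.trans hdeg, fun n => ?_⟩
  rcases le_or_gt n k with hn | hn
  · have hvieta := coeff_eq_esymm_roots_of_card hcard (k := k - n) (by omega)
    rwa [hdeg, leadingCoeff, hdeg, hlead, hcoeff (Nat.sub_le k n), Nat.sub_sub_self hn,
      one_mul] at hvieta
  · rw [hc n hn, Multiset.esymm, Multiset.powersetCard_eq_empty _ (by omega)]
    simp

lemma eq_of_sum_range_mul_eq {R : Type*} [Ring R] {c S S' : ℕ → R} (hc0 : c 0 = 1)
    (h : ∀ n, ∑ j ∈ range n, S j * c (n - 1 - j) = ∑ j ∈ range n, S' j * c (n - 1 - j)) :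
    S = S' := by
  funext j
  induction j using Nat.strong_induction_on with
  | _ j ih =>
    have hj := h (j + 1)
    rw [sum_range_succ, sum_range_succ, Nat.add_sub_cancel, Nat.sub_self, hc0, mul_one, mul_one,
      sum_congr rfl fun i hi => by rw [ih i (mem_range.1 hi)]] at hj
    exact add_left_cancel hj

theorem exists_eq_neg_sum_pow {L : Type*} [Field L] [IsAlgClosed L] {c S : ℕ → L} {k : ℕ}
    (hc0 : c 0 = 1) (hc : ∀ n, k < n → c n = 0)
    (h : ∀ n : ℕ, n * c n = ∑ j ∈ range n, S j * c (n - 1 - j)) :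
    ∃ ω : Fin k → L, ∀ j, S j = -∑ i, ω i ^ (j + 1) := by
  obtain ⟨s, hs, hcs⟩ := exists_eq_neg_one_pow_mul_esymm hc0 hc
  obtain ⟨ω, rfl⟩ := exists_univ_val_map_eq hs
  simp only [← MvPolynomial.aeval_esymm_eq_multiset_esymm (Fin k) L] at hcs
  refine ⟨ω, congrFun (eq_of_sum_range_mul_eq hc0 fun n => ?_)⟩
  rw [← h, hcs, mul_neg_one_pow_mul_aeval_esymm]
  simp only [hcs]

end PowerSums

section Weil

open Polynomial Module

/-- The pullback `χ ∘ N` of a multiplicative character along the norm `N` of a field extension,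
which carries the sums over `F` to their analogues over `E`. -/
noncomputable def normMulChar {F R : Type*} (E : Type*) [Field F] [Field E] [Algebra F E]
    [FiniteDimensional F E] [CommMonoidWithZero R] : MulChar F R →* MulChar E R where
  toFun χ :=
    { toMonoidHom := χ.toMonoidHom.comp (Algebra.norm F)
      map_nonunit' := fun x hx => by
        rw [isUnit_iff_ne_zero, not_not] at hx
        simpa [hx] using χ.map_nonunit not_isUnit_zero }
  map_one' := by
    ext x
    rw [MulChar.one_apply_coe]
    exact MulChar.one_apply (x.isUnit.map (Algebra.norm F))
  map_mul' _ _ := MulChar.ext fun _ => rfl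

lemma normMulChar_apply {F R E : Type*} [Field F] [Field E] [Algebra F E] [FiniteDimensional F E]
    [CommMonoidWithZero R] (χ : MulChar F R) (x : E) :
    normMulChar E χ x = χ (Algebra.norm F x) := rfl

lemma normMulChar_injective (F R E : Type*) [Field F] [Field E] [Finite E] [Algebra F E]
    [FiniteDimensional F E] [CommMonoidWithZero R] :
    Function.Injective (normMulChar E : MulChar F R →* MulChar E R) := by
  have : Finite F := Finite.of_injective _ (algebraMap F E).injective
  intro χ ψ h
  ext a
  obtain ⟨x, hx⟩ := FiniteField.norm_surjective F E a
  rw [← hx, ← normMulChar_apply, h, normMulChar_apply]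

variable {F : Type*} [Field F] {ι : Type*} [Fintype ι]

lemma evalMulChar_fieldCharpoly {E : Type*} [Field E] [Algebra F E] [FiniteDimensional F E]
    (χ : MulChar F ℂ) (α : ι → F) {a : ι → ℕ} (ha : ∀ i, a i ≠ 0) (x : E) :
    evalMulChar α (fun i => χ ^ a i) (fieldCharpoly F x) =
      normMulChar E χ ((∏ i, (C (algebraMap F E (α i)) - X) ^ a i).eval x) := by
  rw [evalMulChar_apply, normMulChar_apply, eval_prod, map_prod, map_prod]
  refine prod_congr rfl fun i _ => ?_
  rw [MulChar.pow_apply' _ (ha i), eval_fieldCharpoly]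
  simp

lemma natDegree_prod_C_sub_X_pow (α : ι → F) (a : ι → ℕ) :
    (∏ i, (C (α i) - X) ^ a i).natDegree = ∑ i, a i := by
  have hlin (b : F) : C b - X = -(X - C b) := (neg_sub _ _).symm
  rw [natDegree_prod _ _ fun i _ => pow_ne_zero _
    (by rw [hlin]; exact neg_ne_zero.2 (X_sub_C_ne_zero _))]
  simp only [natDegree_pow, hlin, natDegree_neg, natDegree_X_sub_C, mul_one]

lemma sum_evalMulChar_fieldCharpoly_of_finrank_eq_one {E : Type*} [Field E] [Algebra F E]
    [Fintype F] [Fintype E] (hE : finrank F E = 1) (α : ι → F) (χ : ι → MulChar F ℂ) :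
    ∑ x : E, evalMulChar α χ (fieldCharpoly F x) = ∑ x, ∏ i, χ i (α i - x) := by
  have hbij : Function.Bijective (algebraMap F E) :=
    (Fintype.bijective_iff_injective_and_card _).2 ⟨(algebraMap F E).injective, by
      rw [card_eq_pow_finrank (K := F) (V := E), hE, pow_one]⟩
  refine (Fintype.sum_bijective _ hbij _ _ fun x => ?_).symm
  rw [evalMulChar_apply]
  refine prod_congr rfl fun i _ => ?_
  rw [eval_fieldCharpoly, ← map_sub, Algebra.norm_algebraMap, hE, pow_one]

/-- The `L`-function of `evalMulChar α χ` is a polynomial of degree less than the number of points,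
and these sums are the power sums of its reciprocal roots. -/
lemma exists_sum_evalMulChar_fieldCharpoly_eq_neg_sum_pow [Finite F] (E : ℕ → Type*)
    [∀ j, Field (E j)] [∀ j, Algebra F (E j)] [∀ j, FiniteDimensional F (E j)]
    [∀ j, Fintype (E j)] (hE : ∀ j, finrank F (E j) = j + 1) {α : ι → F}
    (hα : Function.Injective α) {χ : ι → MulChar F ℂ} {i₀ : ι} (hi₀ : χ i₀ ≠ 1) :
    ∃ ω : Fin (Fintype.card ι - 1) → ℂ,
      ∀ j, ∑ x : E j, evalMulChar α χ (fieldCharpoly F x) = -∑ i, ω i ^ (j + 1) :=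
  exists_eq_neg_sum_pow (c := fun n => ∑ g ∈ monicsOfDegree F n, evalMulChar α χ g)
    (by simp [monicsOfDegree_zero])
    (fun _ hn => sum_monicsOfDegree_evalMulChar_eq_zero hα hi₀ (by omega))
    (mul_sum_monicsOfDegree E hE _)

lemma exists_isPrimitiveRoot_of_dvd_card_sub_one {K : Type*} [Field K] [Fintype K] {d : ℕ}
    (hd : d ∣ Fintype.card K - 1) : ∃ ω : K, IsPrimitiveRoot ω d := by
  obtain ⟨g, hg⟩ := IsCyclic.exists_ofOrder_eq_natCard (α := Kˣ)
  have hcard : Nat.card Kˣ = Fintype.card K - 1 := by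
    rw [Nat.card_units, Nat.card_eq_fintype_card]
  have hpos : 0 < Fintype.card K - 1 := Nat.sub_pos_of_lt Fintype.one_lt_card
  obtain ⟨m, hm⟩ := hd
  rw [hcard, hm] at hg
  exact ⟨_, IsPrimitiveRoot.coe_units_iff.2
    ((IsPrimitiveRoot.orderOf g).pow (hg ▸ hm ▸ hpos) (hg.trans (mul_comm _ _)))⟩

variable [Fintype F]

lemma norm_sum_evalMulChar_fieldCharpoly_le {E : Type*} [Field E] [Algebra F E] [Fintype E]
    {l : ℕ} (hE : finrank F E = 2 * l) {χ : MulChar F ℂ} (hχ : χ ≠ 1) (α : ι → F) {a : ι → ℕ}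
    (ha : ∀ i, a i ≠ 0) (had : (∑ i, a i).Coprime (orderOf χ))
    (hl : orderOf χ * (∑ i, a i + 1) ^ 2 + 2 * ∑ i, a i + 3 ≤ Fintype.card F ^ l) :
    ‖∑ x : E, evalMulChar α (fun i => χ ^ a i) (fieldCharpoly F x)‖ ≤
      (2 * orderOf χ * ∑ i, a i + orderOf χ + 1 : ℕ) * (Fintype.card F : ℝ) ^ l + ∑ i, a i := by
  classical
  obtain ⟨p, _⟩ := CharP.exists F
  obtain ⟨e, hp, hq⟩ := FiniteField.card F p
  have : Fact p.Prime := ⟨hp⟩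
  have : CharP E p := charP_of_injective_algebraMap (algebraMap F E).injective p
  have hcard : Fintype.card E = (Fintype.card F ^ l) ^ 2 := by
    rw [card_eq_pow_finrank (K := F), hE, ← pow_mul, mul_comm]
  have hdvd : orderOf χ ∣ Fintype.card E - 1 :=
    χ.orderOf_dvd_card_sub_one.trans
      (by simpa [hcard, ← pow_mul] using Nat.sub_dvd_pow_sub_pow (Fintype.card F) 1 (l * 2))
  obtain ⟨ω, hω⟩ := exists_isPrimitiveRoot_of_dvd_card_sub_one hdvd
  have hlin (b : E) : C b - X ≠ 0 := fun h => X_sub_C_ne_zero b (by rw [← neg_sub, h, neg_zero])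
  have hdeg := natDegree_prod_C_sub_X_pow (fun i => algebraMap F E (α i)) a
  simp only [evalMulChar_fieldCharpoly χ α ha]
  rw [show Fintype.card F ^ l = p ^ (e * l : ℕ) by rw [hq, pow_mul]] at hcard hl
  have key := norm_sum_mulChar_eval_le (ψ := normMulChar E χ) hcard hω χ.orderOf_pos
    (prod_ne_zero_iff.2 fun i _ => pow_ne_zero (a i) (hlin (algebraMap F E (α i))))
    (hdeg ▸ had) (hdeg ▸ hl) ((map_ne_one_iff _ (normMulChar_injective F ℂ E)).2 hχ)
    (by rw [← map_pow, pow_orderOf_eq_one, map_one])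
  rw [hdeg] at key
  simpa [hq, ← pow_mul] using key

theorem norm_sum_prod_mulChar_le_of_coprime_sum {χ : MulChar F ℂ} (hχ : χ ≠ 1) {α : ι → F}
    (hα : Function.Injective α) {a : ι → ℕ} (ha : ∀ i, a i ≠ 0)
    (had : (∑ i, a i).Coprime (orderOf χ)) :
    ‖∑ x, ∏ i, χ (α i - x) ^ a i‖ ≤ (Fintype.card ι - 1 : ℕ) * √(Fintype.card F) := by
  obtain ⟨p, _⟩ := CharP.exists F
  have : Fact p.Prime := ⟨CharP.char_is_prime F p⟩
  let E (j : ℕ) : Type := FiniteField.Extension F p (j + 1)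
  let (j : ℕ) : Fintype (E j) := Fintype.ofFinite _
  have hE (j : ℕ) : finrank F (E j) = j + 1 := FiniteField.finrank_extension ..
  obtain ⟨i₀, hi₀⟩ : ∃ i, χ ^ a i ≠ 1 := by
    by_contra! hall
    exact hχ (orderOf_eq_one_iff.1 (Nat.eq_one_of_dvd_coprimes had
      (dvd_sum fun i _ => orderOf_dvd_of_pow_eq_one (hall i)) dvd_rfl))
  obtain ⟨ω, hω⟩ := exists_sum_evalMulChar_fieldCharpoly_eq_neg_sum_pow E hE hα
    (χ := fun i => χ ^ a i) hi₀
  set d := orderOf χ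
  set D := ∑ i, a i
  have hq : 1 < Fintype.card F := Fintype.one_lt_card
  have hω_le (i) : ‖ω i ^ 2‖ ≤ Fintype.card F := by
    refine norm_le_of_norm_sum_pow_le (z := fun i => ω i ^ 2) (by positivity)
      (C := (2 * d * D + d + 1 : ℕ) + D) (l₀ := d * (D + 1) ^ 2 + 2 * D + 3) (fun l hl => ?_) i
    have hl' : 2 * l - 1 + 1 = 2 * l := by omega
    have hbound := norm_sum_evalMulChar_fieldCharpoly_le ((hE (2 * l - 1)).trans hl') hχ α ha had
      (hl.trans (Nat.lt_pow_self hq).le)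
    rw [hω, norm_neg, hl'] at hbound
    have hpow : (1 : ℝ) ≤ (Fintype.card F : ℝ) ^ l := one_le_pow₀ (Nat.one_le_cast.2 hq.le)
    simp only [← pow_mul, add_mul (_ : ℝ) (D : ℝ)]
    exact hbound.trans (add_le_add_right (le_mul_of_one_le_right D.cast_nonneg hpow) _)
  have hsum := sum_evalMulChar_fieldCharpoly_of_finrank_eq_one (hE 0) α fun i => χ ^ a i
  simp only [MulChar.pow_apply' _ (ha _), hω, zero_add, pow_one] at hsum
  calc ‖∑ x, ∏ i, χ (α i - x) ^ a i‖
      ≤ ∑ i, ‖ω i‖ := by rw [← hsum, norm_neg]; exact norm_sum_le _ _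
    _ ≤ ∑ _, √(Fintype.card F) :=
        sum_le_sum fun i _ => Real.le_sqrt_of_sq_le (by simpa using hω_le i)
    _ = _ := by simp

end Weil

section WeilMoebius

variable {F : Type*} [Field F] {ι : Type*} [Fintype ι]

lemma coprime_sum_update_sub_one_mul_sum [DecidableEq ι] {a : ι → ℕ} {d : ℕ} (hd : 0 < d) {i₀ : ι}
    (had : (a i₀).Coprime d) :
    (∑ i, Function.update a i₀ ((d - 1) * ∑ j, a j) i).Coprime d := by
  have hsum : ∑ i, Function.update a i₀ ((d - 1) * ∑ j, a j) i + a i₀ = d * ∑ j, a j := by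
    obtain ⟨d, rfl⟩ := Nat.exists_eq_succ_of_ne_zero hd.ne'
    rw [sum_update_of_mem (mem_univ i₀), add_assoc, add_comm _ (a i₀),
      ← sum_eq_add_sum_sdiff_singleton_of_mem (mem_univ i₀), Nat.succ_sub_one, Nat.succ_mul]
  refine Nat.eq_one_of_dvd_coprimes had ?_ (Nat.gcd_dvd_right _ _)
  exact (Nat.dvd_add_right (Nat.gcd_dvd_left _ _)).1
    (hsum ▸ (Nat.gcd_dvd_right _ _).mul_right _)

/-- The Möbius substitution `x = α i₀ - t⁻¹` sends the point `α i₀` to infinity. The poles it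
creates combine to a factor at the new point `0`, written as the junk value `(α i₀ - α i₀)⁻¹`. -/
lemma prod_mulChar_sub_sub_inv [DecidableEq ι] {R : Type*} [CommMonoidWithZero R] {χ : MulChar F R}
    {d : ℕ} (hd : 1 < d) (hχd : χ ^ d = 1) {α : ι → F} (hα : Function.Injective α) {a : ι → ℕ}
    {i₀ : ι} (ha : a i₀ ≠ 0) (t : F) :
    ∏ i, χ (α i - (α i₀ - t⁻¹)) ^ a i =
      (χ (-1) ^ ((d - 1) * ∑ i, a i) * ∏ i ∈ univ.erase i₀, χ (α i₀ - α i) ^ a i) *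
        ∏ i, χ ((α i₀ - α i)⁻¹ - t) ^ Function.update a i₀ ((d - 1) * ∑ i, a i) i := by
  set b := Function.update a i₀ ((d - 1) * ∑ i, a i)
  have hsum : ∑ i, a i = a i₀ + ∑ i ∈ univ.erase i₀, a i := (add_sum_erase _ _ (mem_univ i₀)).symm
  have hb₀ : b i₀ = (d - 1) * ∑ i, a i := Function.update_self ..
  have hb₁ : ∀ i ∈ univ.erase i₀, b i = a i := fun i hi =>
    Function.update_of_ne (ne_of_mem_erase hi) ..
  rw [← mul_prod_erase _ _ (mem_univ i₀), ← mul_prod_erase univ (fun i => χ (_ - t) ^ b i)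
    (mem_univ i₀), hb₀, sub_self, inv_zero, zero_sub, sub_sub_cancel]
  obtain rfl | ht := eq_or_ne t 0
  · have hne : (d - 1) * ∑ i, a i ≠ 0 := mul_ne_zero (by omega) (by omega)
    simp [χ.map_zero, zero_pow ha, zero_pow hne]
  have hinv : χ t⁻¹ = χ t ^ (d - 1) := by
    rw [← MulChar.inv_apply', ← MulChar.pow_apply' _ (by omega),
      eq_inv_of_mul_eq_one_left ((pow_sub_one_mul (by omega) χ).trans hχd)]
  have hneg : χ t = χ (-1) * χ (-t) := by rw [← map_mul, neg_mul_neg, one_mul]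
  have hfactor : ∀ i ∈ univ.erase i₀, χ (α i - (α i₀ - t⁻¹)) ^ a i =
      χ t⁻¹ ^ a i * (χ (α i₀ - α i) ^ a i * χ ((α i₀ - α i)⁻¹ - t) ^ b i) := fun i hi => by
    have := sub_ne_zero.2 (hα.ne (ne_of_mem_erase hi)).symm
    rw [hb₁ i hi, ← mul_pow, ← mul_pow, ← map_mul, ← map_mul]
    congr 2
    field_simp
    ring
  rw [prod_congr rfl hfactor, prod_mul_distrib, prod_mul_distrib, prod_pow_eq_pow_sum,
    ← mul_assoc (χ t⁻¹ ^ a i₀), ← pow_add, ← hsum, hinv, ← pow_mul, hneg, mul_pow]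
  exact mul_mul_mul_comm ..

variable [Fintype F]

theorem norm_sum_prod_mulChar_le_of_coprime {χ : MulChar F ℂ} (hχ : χ ≠ 1) {α : ι → F}
    (hα : Function.Injective α) {a : ι → ℕ} (ha : ∀ i, a i ≠ 0) {i₀ : ι}
    (had : (a i₀).Coprime (orderOf χ)) :
    ‖∑ x, ∏ i, χ (α i - x) ^ a i‖ ≤ (Fintype.card ι - 1 : ℕ) * √(Fintype.card F) := by
  classical
  set d := orderOf χ
  have hd : 1 < d := by
    have := χ.orderOf_pos
    have := orderOf_eq_one_iff.not.2 hχ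
    omega
  set b := Function.update a i₀ ((d - 1) * ∑ i, a i)
  have hb (i) : b i ≠ 0 := by
    obtain rfl | hi := eq_or_ne i i₀
    · have hsum : ∑ j, a j ≠ 0 := fun h => ha i (sum_eq_zero_iff.1 h i (mem_univ i))
      simpa [b, Nat.sub_eq_zero_iff_le, hd] using hsum
    · simpa [b, hi] using ha i
  have hβ : Function.Injective fun i => (α i₀ - α i)⁻¹ := fun i j hij =>
    hα (sub_right_injective (inv_injective hij))
  have hnorm (y : F) (n : ℕ) : ‖χ y ^ n‖ ≤ 1 := by
    rw [norm_pow]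
    exact pow_le_one₀ (norm_nonneg _) (norm_mulChar_apply_le_one χ y)
  have hbij : Function.Bijective fun t : F => α i₀ - t⁻¹ :=
    (Equiv.subLeft (α i₀)).bijective.comp inv_involutive.bijective
  rw [← hbij.sum_comp (fun x => ∏ i, χ (α i - x) ^ a i)]
  simp only [prod_mulChar_sub_sub_inv hd (pow_orderOf_eq_one χ) hα (ha i₀)]
  rw [← mul_sum, norm_mul, norm_mul, norm_prod]
  refine (mul_le_of_le_one_left (norm_nonneg _) ?_).trans
    (norm_sum_prod_mulChar_le_of_coprime_sum hχ hβ hb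
      (coprime_sum_update_sub_one_mul_sum (by omega) had))
  exact mul_le_one₀ (hnorm _ _) (prod_nonneg fun _ _ => norm_nonneg _)
    (prod_le_one (fun _ _ => norm_nonneg _) fun _ _ => hnorm _ _)

end WeilMoebius

section PrimePowerOrder

lemma exists_ofReal_eq_sum_Ico_mulChar_pow {F : Type*} [Field F] [Finite F]
    (χ : MulChar F ℂ) (x : F) :
    ∃ r : ℝ, ∑ j ∈ Ico 1 (orderOf χ), χ x ^ j = r := by
  obtain rfl | hx := eq_or_ne x 0
  · refine ⟨0, sum_eq_zero fun j hj => ?_⟩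
    rw [χ.map_zero, zero_pow (by have := mem_Ico.1 hj; omega)]
  have hpow : χ x ^ orderOf χ = 1 := by
    rw [← MulChar.pow_apply' _ χ.orderOf_pos.ne', pow_orderOf_eq_one,
      MulChar.one_apply hx.isUnit]
  have hgeom := geom_sum_mul (χ x) (orderOf χ)
  rw [hpow, sub_self, range_eq_Ico, sum_eq_sum_Ico_succ_bot χ.orderOf_pos, pow_zero] at hgeom
  rcases mul_eq_zero.1 hgeom with h | h
  · exact ⟨-1, by push_cast; linear_combination h⟩
  · exact ⟨#(Ico 1 (orderOf χ)), by simp [sub_eq_zero.1 h]⟩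

variable {F : Type*} [Field F] [Fintype F] {χ : MulChar F ℂ}

/-- Dividing the exponents by their greatest common divisor makes one of them coprime to the order
of the character. -/
theorem norm_sum_prod_mulChar_le_of_isPrimePow {ι : Type*} [Fintype ι] [Nonempty ι]
    (hχ : IsPrimePow (orderOf χ)) {α : ι → F} (hα : Function.Injective α) {a : ι → ℕ}
    (ha : ∀ i, χ ^ a i ≠ 1) :
    ‖∑ x, ∏ i, χ (x - α i) ^ a i‖ ≤ ((Fintype.card ι : ℝ) - 1) * √(Fintype.card F) := by
  obtain ⟨p, k, hp, -, hpk⟩ := (isPrimePow_nat_iff _).1 hχ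
  obtain ⟨b, hab, hb⟩ := extract_gcd a (s := univ) univ_nonempty
  set g := univ.gcd a
  replace hab (i) : a i = g * b i := hab i (mem_univ i)
  have ha0 (i) : a i ≠ 0 := fun h => ha i (by rw [h, pow_zero])
  have hb0 (i) : b i ≠ 0 := right_ne_zero_of_mul (hab i ▸ ha0 i)
  obtain ⟨i⟩ := ‹Nonempty ι›
  have hg : g ≠ 0 := left_ne_zero_of_mul (hab i ▸ ha0 i)
  have hχg : χ ^ g ≠ 1 := fun h => ha i (by rw [hab, pow_mul, h, one_pow])
  obtain ⟨m, -, hm⟩ := (Nat.dvd_prime_pow hp).1 (hpk ▸ orderOf_pow_dvd (x := χ) g)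
  obtain ⟨i₀, hi₀⟩ : ∃ i₀, ¬ p ∣ b i₀ := by
    by_contra! hdvd
    exact hp.one_lt.ne' (Nat.dvd_one.1 (hb ▸ dvd_gcd fun i _ => hdvd i))
  have hcop : (b i₀).Coprime (orderOf (χ ^ g)) :=
    hm ▸ ((hp.coprime_iff_not_dvd.2 hi₀).symm.pow_right m)
  have key := norm_sum_prod_mulChar_le_of_coprime hχg (neg_injective.comp hα) hb0 hcop
  rw [← Equiv.sum_comp (Equiv.neg F), Nat.cast_pred Fintype.card_pos] at key
  simpa only [Function.comp_apply, Equiv.neg_apply, neg_sub_neg, MulChar.pow_apply' _ hg,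
    ← pow_mul, ← hab] using key

variable [DecidableEq F] {A T : Finset F}

lemma norm_sum_sdiff_prod_mulChar_le (hχ : IsPrimePow (orderOf χ)) (hA : A.Nonempty)
    (hAT : A ⊆ T) {a : A → ℕ} (ha : ∀ i, χ ^ a i ≠ 1) :
    ‖∑ γ ∈ univ \ T, ∏ i : A, χ (γ - i) ^ a i‖ ≤
      ((#A : ℝ) - 1) * √(Fintype.card F) + (#T - #A) := by
  have : Nonempty A := hA.coe_sort
  set f : F → ℂ := fun γ => ∏ i : A, χ (γ - i) ^ a i
  have hf_zero : ∀ γ ∈ A, f γ = 0 := fun γ hγ => by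
    have ha0 : a ⟨γ, hγ⟩ ≠ 0 := fun h => ha ⟨γ, hγ⟩ (by rw [h, pow_zero])
    exact prod_eq_zero (mem_univ ⟨γ, hγ⟩) (by simp [χ.map_zero, zero_pow ha0])
  have hf_le (γ) : ‖f γ‖ ≤ 1 := by
    simp only [f, norm_prod, norm_pow]
    exact prod_le_one (fun _ _ => by positivity) fun _ _ =>
      pow_le_one₀ (norm_nonneg _) (norm_mulChar_apply_le_one χ _)
  have hsplit : ∑ γ ∈ univ \ T, f γ = ∑ γ, f γ - ∑ γ ∈ T \ A, f γ := by
    rw [← sum_sdiff (subset_univ T), ← sum_sdiff hAT, sum_eq_zero hf_zero, add_zero,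
      add_sub_cancel_right]
  have hweil : ‖∑ γ, f γ‖ ≤ ((#A : ℝ) - 1) * √(Fintype.card F) := by
    simpa only [Fintype.card_coe] using
      norm_sum_prod_mulChar_le_of_isPrimePow hχ (Subtype.val_injective (p := (· ∈ A))) ha
  have hremoved : ‖∑ γ ∈ T \ A, f γ‖ ≤ #T - #A := by
    rw [← cast_card_sdiff hAT]
    exact (norm_sum_le_of_le _ fun γ _ => hf_le γ).trans_eq (by simp)
  rw [hsplit]
  exact (norm_sub_le _ _).trans (add_le_add hweil hremoved)

lemma norm_sum_sdiff_prod_sum_Ico_mulChar_pow_le (hχ : IsPrimePow (orderOf χ)) (hA : A.Nonempty)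
    (hAT : A ⊆ T) :
    ‖∑ γ ∈ univ \ T, ∏ α ∈ A, ∑ j ∈ Ico 1 (orderOf χ), χ (γ - α) ^ j‖ ≤
      ((orderOf χ : ℝ) - 1) ^ #A * (((#A : ℝ) - 1) * √(Fintype.card F) + (#T - #A)) := by
  have hexpand (γ : F) : ∏ α ∈ A, ∑ j ∈ Ico 1 (orderOf χ), χ (γ - α) ^ j =
      ∑ a ∈ Fintype.piFinset fun _ : A => Ico 1 (orderOf χ), ∏ i : A, χ (γ - i) ^ a i := by
    rw [← prod_coe_sort, prod_univ_sum]
  simp only [hexpand]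
  rw [sum_comm]
  refine (norm_sum_le_of_le _ fun a ha => norm_sum_sdiff_prod_mulChar_le hχ hA hAT fun i => ?_)
    |>.trans_eq (by simp [Nat.cast_pred χ.orderOf_pos, mul_add])
  obtain ⟨h1, h2⟩ := mem_Ico.1 (Fintype.mem_piFinset.1 ha i)
  exact pow_ne_one_of_lt_orderOf (by omega) h2

theorem norm_sum_sdiff_prod_sub_le (hχ : IsPrimePow (orderOf χ)) (T : Finset F) :
    ‖∑ γ ∈ univ \ T, ∏ α ∈ T, ((orderOf χ : ℂ) - 1 - ∑ j ∈ Ico 1 (orderOf χ), χ (γ - α) ^ j) -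
        ((orderOf χ : ℂ) - 1) ^ #T * (Fintype.card F - #T)‖ ≤
      ((orderOf χ : ℝ) - 1) ^ #T * ∑ A ∈ T.powerset.erase ∅,
        (((#A : ℝ) - 1) * √(Fintype.card F) + (#T - #A)) := by
  set d := orderOf χ
  have hnorm : ‖(d : ℂ) - 1‖ = d - 1 := by
    rw [← Nat.cast_pred χ.orderOf_pos, ← Nat.cast_pred χ.orderOf_pos, Complex.norm_natCast]
  have hexpand (γ : F) : ∏ α ∈ T, ((d : ℂ) - 1 - ∑ j ∈ Ico 1 d, χ (γ - α) ^ j) =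
      ∑ A ∈ T.powerset, (-1) ^ #A * ((d : ℂ) - 1) ^ #(T \ A) *
        ∏ α ∈ A, ∑ j ∈ Ico 1 d, χ (γ - α) ^ j := by
    simp only [prod_sub _ _ T, prod_const]
  have hmain : ∑ γ ∈ univ \ T, (-1 : ℂ) ^ #(∅ : Finset F) * ((d : ℂ) - 1) ^ #(T \ ∅) *
      ∏ α ∈ ∅, ∑ j ∈ Ico 1 d, χ (γ - α) ^ j = ((d : ℂ) - 1) ^ #T * (Fintype.card F - #T) := by
    simp [cast_card_sdiff (subset_univ T), mul_comm]
  simp only [hexpand]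
  rw [sum_comm, ← add_sum_erase _ _ (empty_mem_powerset T), hmain, add_sub_cancel_left, mul_sum]
  refine norm_sum_le_of_le _ fun A hA => ?_
  obtain ⟨hA, hAT⟩ := mem_erase.1 hA
  rw [mem_powerset] at hAT
  have hbound := norm_sum_sdiff_prod_sum_Ico_mulChar_pow_le hχ (nonempty_iff_ne_empty.2 hA) hAT
  calc _ = ((d : ℝ) - 1) ^ #(T \ A) *
        ‖∑ γ ∈ univ \ T, ∏ α ∈ A, ∑ j ∈ Ico 1 d, χ (γ - α) ^ j‖ := by
        rw [← mul_sum]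
        simp [hnorm]
    _ ≤ ((d : ℝ) - 1) ^ #(T \ A) * (((d : ℝ) - 1) ^ #A *
        (((#A : ℝ) - 1) * √(Fintype.card F) + (#T - #A))) :=
        mul_le_mul_of_nonneg_left hbound (pow_nonneg (hnorm ▸ norm_nonneg _) _)
    _ = _ := by rw [← mul_assoc, ← pow_add, card_sdiff_add_card_eq_card hAT]

lemma im_sum_sdiff_prod_sub_eq_zero (χ : MulChar F ℂ) (T : Finset F) :
    (∑ γ ∈ univ \ T, ∏ α ∈ T,
      ((orderOf χ : ℂ) - 1 - ∑ j ∈ Ico 1 (orderOf χ), χ (γ - α) ^ j)).im = 0 := by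
  choose r hr using exists_ofReal_eq_sum_Ico_mulChar_pow χ
  simp only [hr]
  norm_cast

lemma sum_card_powerset {α : Type*} (T : Finset α) :
    (∑ A ∈ T.powerset, #A : ℝ) = #T * 2 ^ #T / 2 := by
  rw [sum_powerset_apply_card fun k => (k : ℝ)]
  simp only [nsmul_eq_mul, mul_comm _ (_ : ℝ)]
  obtain hT | hT := eq_or_ne #T 0
  · simp [hT]
  · rw [← pow_sub_one_mul hT (2 : ℝ), ← mul_assoc, mul_div_cancel_right₀ _ two_ne_zero]
    exact_mod_cast Nat.sum_range_mul_choose #T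

lemma sum_powerset_erase_empty {α : Type*} [DecidableEq α] (T : Finset α) (s : ℝ) :
    ∑ A ∈ T.powerset.erase ∅, (((#A : ℝ) - 1) * s + (#T - #A)) =
      (((#T : ℝ) / 2 - 1) * 2 ^ #T + 1) * s + #T * 2 ^ #T / 2 - #T := by
  rw [sum_erase_eq_sub (empty_mem_powerset T), sum_add_distrib, ← sum_mul, sum_sub_distrib,
    sum_sub_distrib, sum_card_powerset]
  simp only [sum_const, card_powerset, card_empty, nsmul_eq_mul]
  push_cast
  ring

end PrimePowerOrder

theorem quartic_char_sum_lower_bound_general {F : Type*} [Field F] [Fintype F]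
    [DecidableEq F] {χ : MulChar F ℂ} (hχ : IsPrimePow (orderOf χ)) (T : Finset F) :
    (∑ γ ∈ univ \ T, ∏ α ∈ T,
        ((orderOf χ : ℂ) - 1 - ∑ j ∈ Ico 1 (orderOf χ), χ (γ - α) ^ j)).im = 0 ∧
      ((orderOf χ : ℝ) - 1) ^ #T * (Fintype.card F -
          (((#T : ℝ) / 2 - 1) * 2 ^ #T + 1) * √(Fintype.card F) - #T * 2 ^ #T / 2) ≤
        (∑ γ ∈ univ \ T, ∏ α ∈ T,
          ((orderOf χ : ℂ) - 1 - ∑ j ∈ Ico 1 (orderOf χ), χ (γ - α) ^ j)).re := by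
  refine ⟨im_sum_sdiff_prod_sub_eq_zero χ T, ?_⟩
  have hdev := (Complex.abs_re_le_norm _).trans (norm_sum_sdiff_prod_sub_le hχ T)
  have hmain : ((orderOf χ : ℂ) - 1) ^ #T * (Fintype.card F - #T) =
      (((orderOf χ : ℝ) - 1) ^ #T * (Fintype.card F - #T) : ℝ) := by
    push_cast
    rfl
  rw [hmain, Complex.sub_re, Complex.ofReal_re, sum_powerset_erase_empty] at hdev
  linarith [(abs_le.1 hdev).1]

lemma card_zero_one_neg_one_sqrt_neg_one {R : Type*} [Ring R] [IsDomain R] [DecidableEq R]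
    (h2 : (-1 : R) ≠ 1) {ζ : R} (hζ : ζ ^ 2 = -1) : #({0, 1, -1, ζ, -ζ} : Finset R) = 5 := by
  have h0 : ζ ≠ 0 := by rintro rfl; simp at hζ
  have h1 : ζ ≠ 1 := by rintro rfl; exact h2 (by simpa using hζ.symm)
  have h1' : ζ ≠ -1 := by rintro rfl; exact h2 (by simpa using hζ.symm)
  have hneg : ζ ≠ -ζ := fun h => h2 (mul_left_cancel₀ h0 (by rw [mul_neg_one, ← h, mul_one]))
  have h1n : (1 : R) ≠ -ζ := fun h => h1' (by rw [h, neg_neg])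
  have h1n' : (-1 : R) ≠ -ζ := fun h => h1 (neg_injective h).symm
  simp [card_insert_of_notMem, h2.symm, h0, h0.symm, h1.symm, h1'.symm, hneg, h1n, h1n']

/-- For a prime power `q ≡ 1 (mod 4)`, with `C₅ = {0, 1, -1, ζ, -ζ}` where `ζ² = -1`, and a
multiplicative character `χ₄` of order `4`, the character sum
`S(4; q, 5) = ∑_{γ ∈ F_q \ C₅} ∏_{α ∈ C₅} (3 - χ₄(γ - α) - χ₄((γ - α)²) - χ₄((γ - α)³))`
is real and satisfies `S(4; q, 5) ≥ 3⁵ (q - 49 √q - 160)`. -/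
theorem quartic_char_sum_lower_bound
    (q : ℕ) (hq : IsPrimePow q) (hq4 : q % 4 = 1)
    (F : Type*) [Field F] [Fintype F] [DecidableEq F] (hF : Fintype.card F = q)
    (ζ : F) (hζ : ζ ^ 2 = -1)
    (χ : MulChar F ℂ) (hχ : orderOf χ = 4) :
    (∑ γ ∈ univ \ ({0, 1, -1, ζ, -ζ} : Finset F),
        ∏ α ∈ ({0, 1, -1, ζ, -ζ} : Finset F),
          (3 - χ (γ - α) - χ ((γ - α) ^ 2) - χ ((γ - α) ^ 3))).im = 0 ∧
      3 ^ 5 * ((q : ℝ) - 49 * Real.sqrt q - 160) ≤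
        (∑ γ ∈ univ \ ({0, 1, -1, ζ, -ζ} : Finset F),
          ∏ α ∈ ({0, 1, -1, ζ, -ζ} : Finset F),
            (3 - χ (γ - α) - χ ((γ - α) ^ 2) - χ ((γ - α) ^ 3))).re := by
  have hneg : (-1 : F) ≠ 1 := Ring.neg_one_ne_one_of_char_ne_two fun h => by
    have := FiniteField.even_card_of_char_two h
    omega
  have hχ4 : IsPrimePow (orderOf χ) := hχ ▸ Nat.prime_two.isPrimePow.pow two_ne_zero
  have hfactor (x : F) : 3 - χ x - χ (x ^ 2) - χ (x ^ 3) =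
      ((orderOf χ : ℂ) - 1 - ∑ j ∈ Ico 1 (orderOf χ), χ x ^ j) := by
    simp only [hχ, map_pow, sum_Ico_eq_sum_range, sum_range_succ, sum_range_zero, Nat.reduceSub]
    push_cast
    ring
  obtain ⟨him, hre⟩ := quartic_char_sum_lower_bound_general hχ4 {0, 1, -1, ζ, -ζ}
  simp only [hfactor]
  refine ⟨him, le_trans ?_ hre⟩
  rw [card_zero_one_neg_one_sqrt_neg_one hneg hζ, hχ, hF]
  norm_num
  linarith
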